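/- arXiv:1501.00932 — 2 statements merged into one kernel-verified Lean document; each statement's English description precedes it below -/
import Mathlib

section
/- Let A be a 2×2 matrix with integer entries whose determinant is 1 or −1. Suppose there exist λ ∈ ℝ and a nonzero vector v ∈ ℝ² with A·v = λ·v (viewing A as a real matrix), such that v is not a real scalar multiple of any nonzero vector with integer coordinates. Then either A is the identity matrix, or A is minus the identity matrix, or A is hyperbolic, i.e. A has a real eigenvalue μ with |μ| > 1. -/
open Matrix

/-!
A real vector in the plane has irrational slope exactly when its coordinates are linearly
independent over `ℤ`. An integer matrix is determined by its value on such a vector, so if the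
eigenvalue `lam` is an integer `e`, then `A = e • 1`; in particular `|lam| = 1` forces `A = ±1`.
Likewise a nonzero `A` has `det A ≠ 0`: an integer vector `w ≠ 0` with `w A = 0` would give
`lam * (w ⬝ v) = 0` with `w ⬝ v ≠ 0`, so `lam = 0` and `A = 0`. Thus `det A` is a nonzero integer,
the product of the eigenvalues has absolute value at least one, and an eigenvalue with `|lam| < 1`
must be compensated by one of absolute value greater than one.
-/

section IndependentCoordinates

variable {m n R S : Type*} [Fintype n] [CommRing R] [CommRing S] [Algebra R S]

theorem eq_of_map_mulVec_eq_of_linearIndependent {A B : Matrix m n R} {v : n → S}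
    (hv : LinearIndependent R v)
    (h : A.map (algebraMap R S) *ᵥ v = B.map (algebraMap R S) *ᵥ v) : A = B := by
  ext i j
  refine congrFun (hv.fintypeLinearCombination_injective ?_) j
  simpa [mulVec, dotProduct, Fintype.linearCombination_apply, Algebra.smul_def] using congrFun h i

theorem eq_smul_one_of_map_mulVec_eq_smul [DecidableEq n] {A : Matrix n n R} {v : n → S}
    (hv : LinearIndependent R v) {r : R}
    (h : A.map (algebraMap R S) *ᵥ v = algebraMap R S r • v) : A = r • 1 := by
  refine eq_of_map_mulVec_eq_of_linearIndependent hv (h.trans ?_)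
  simp [smul_one_eq_diagonal, diagonal_map]

theorem det_ne_zero_of_map_mulVec_eq_smul [DecidableEq n] [IsDomain R] [IsDomain S]
    {A : Matrix n n R} (hA : A ≠ 0) {v : n → S} (hv : LinearIndependent R v) {lam : S}
    (h : A.map (algebraMap R S) *ᵥ v = lam • v) : A.det ≠ 0 := by
  intro hdet
  obtain ⟨w, hw, hwA⟩ := exists_vecMul_eq_zero_iff.mpr hdet
  have hwv : (algebraMap R S ∘ w) ⬝ᵥ v ≠ 0 := fun h0 ↦
    hw <| funext <| Fintype.linearIndependent_iff.mp hv w <| by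
      simpa [dotProduct, Algebra.smul_def] using h0
  have hlam_mul : lam * ((algebraMap R S ∘ w) ⬝ᵥ v) = 0 := by
    rw [← smul_eq_mul, ← dotProduct_smul, ← h, dotProduct_mulVec]
    have hwA_map : (algebraMap R S ∘ w) ᵥ* A.map (algebraMap R S) = 0 := by
      ext j
      rw [← RingHom.map_vecMul, hwA, Pi.zero_apply, map_zero, Pi.zero_apply]
    rw [hwA_map, zero_dotProduct]
  have hlam : lam = 0 := (mul_eq_zero.mp hlam_mul).resolve_right hwv
  exact hA <| by simpa using eq_smul_one_of_map_mulVec_eq_smul hv (r := 0) (by simpa [hlam] using h)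

end IndependentCoordinates

theorem linearIndependent_int_of_forall_ne_smul {K : Type*} [Field K] [CharZero K] {v : Fin 2 → K}
    (hv : ∀ (c : K) (w : Fin 2 → ℤ), w ≠ 0 → v ≠ c • fun i ↦ (w i : K)) :
    LinearIndependent ℤ v := by
  refine Fintype.linearIndependent_iff.mpr fun g hg ↦ ?_
  have hrel : (g 0 : K) * v 0 + g 1 * v 1 = 0 := by simpa using hg
  suffices g = 0 from congrFun this
  by_contra hg0
  have hnorm : (g 0 : K) ^ 2 + (g 1 : K) ^ 2 ≠ 0 := by
    have : g ⬝ᵥ g ≠ 0 := dotProduct_self_eq_zero.not.mpr hg0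
    rw [dotProduct, Fin.sum_univ_two, ← sq, ← sq] at this
    exact_mod_cast this
  have hturn : ![g 1, -g 0] ≠ 0 := fun h ↦ hg0 <| funext <| Fin.forall_fin_two.mpr
    ⟨neg_eq_zero.mp (congrFun h 1), congrFun h 0⟩
  -- `v` is orthogonal to `g`, hence proportional to the quarter turn of `g`.
  set c : K := (g 1 * v 0 - g 0 * v 1) / (g 0 ^ 2 + g 1 ^ 2) with hc
  have hv0 : v 0 = c * g 1 := by
    rw [hc, div_mul_eq_mul_div, eq_div_iff hnorm]
    linear_combination (g 0 : K) * hrel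
  have hv1 : v 1 = c * -g 0 := by
    rw [hc, div_mul_eq_mul_div, eq_div_iff hnorm]
    linear_combination (g 1 : K) * hrel
  exact hv c _ hturn <| funext <| Fin.forall_fin_two.mpr
    ⟨by simpa using hv0, by simpa using hv1⟩

section Eigenvalues

variable {n : Type*} [Fintype n] [DecidableEq n]

theorem isRoot_charpoly_iff_exists_mulVec_eq_smul {R : Type*} [CommRing R] [IsDomain R]
    {M : Matrix n n R} {μ : R} : M.charpoly.IsRoot μ ↔ ∃ w : n → R, w ≠ 0 ∧ M *ᵥ w = μ • w := by
  rw [Polynomial.IsRoot.def, eval_charpoly, ← exists_mulVec_eq_zero_iff]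
  simp [sub_mulVec, sub_eq_zero, eq_comm]

theorem splits_charpoly_fin_two {K : Type*} [Field K] {M : Matrix (Fin 2) (Fin 2) K} {μ : K}
    (hμ : M.charpoly.IsRoot μ) : M.charpoly.Splits :=
  .of_natDegree_eq_two (by simp) hμ

theorem norm_multiset_prod_le_one {R : Type*} [SeminormedCommRing R] [NormOneClass R]
    {s : Multiset R} (hs : ∀ x ∈ s, ‖x‖ ≤ 1) : ‖s.prod‖ ≤ 1 :=
  Multiset.prod_induction (‖·‖ ≤ 1) s
    (fun x y hx hy ↦ (norm_mul_le x y).trans (mul_le_one₀ hx (norm_nonneg y) hy)) norm_one.le hs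

theorem exists_one_lt_norm_of_one_le_norm_prod {R : Type*} [SeminormedCommRing R] [NormOneClass R]
    {s : Multiset R} (hs : 1 ≤ ‖s.prod‖) {x : R} (hx : x ∈ s) (hx1 : ‖x‖ < 1) :
    ∃ y ∈ s, 1 < ‖y‖ := by
  by_contra! hle
  obtain ⟨t, rfl⟩ := Multiset.exists_cons_of_mem hx
  have ht : ‖t.prod‖ ≤ 1 := norm_multiset_prod_le_one fun y hy ↦ hle y (Multiset.mem_cons_of_mem hy)
  refine hs.not_gt ?_
  calc ‖(x ::ₘ t).prod‖ = ‖x * t.prod‖ := by rw [Multiset.prod_cons]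
    _ ≤ ‖x‖ * ‖t.prod‖ := norm_mul_le _ _
    _ ≤ ‖x‖ := mul_le_of_le_one_right (norm_nonneg x) ht
    _ < 1 := hx1

theorem exists_isRoot_charpoly_one_lt_norm {K : Type*} [NormedField K] {M : Matrix n n K}
    (hsplits : M.charpoly.Splits) (hdet : 1 ≤ ‖M.det‖) {lam : K} (hroot : M.charpoly.IsRoot lam)
    (hlam : ‖lam‖ < 1) : ∃ μ, M.charpoly.IsRoot μ ∧ 1 < ‖μ‖ := by
  rw [det_eq_prod_roots_charpoly_of_splits hsplits] at hdet
  obtain ⟨μ, hμ, hμ1⟩ := exists_one_lt_norm_of_one_le_norm_prod hdet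
    ((Polynomial.mem_roots M.charpoly_monic.ne_zero).mpr hroot) hlam
  exact ⟨μ, Polynomial.isRoot_of_mem_roots hμ, hμ1⟩

theorem irrational_eigendirection_implies_hyperbolic_or_pm_id_general {A : Matrix n n ℤ}
    (hA : A ≠ 0) (hsplits : (A.map (Int.cast : ℤ → ℝ)).charpoly.Splits) {lam : ℝ} {v : n → ℝ}
    (hv : LinearIndependent ℤ v)
    (heig : A.map (Int.cast : ℤ → ℝ) *ᵥ v = lam • v) :
    A = 1 ∨ A = -1 ∨
      ∃ μ : ℝ, 1 < |μ| ∧ ∃ w : n → ℝ, w ≠ 0 ∧ A.map (Int.cast : ℤ → ℝ) *ᵥ w = μ • w := by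
  have hv0 : v ≠ 0 := by
    rintro rfl
    exact hA <| ext fun i _ ↦ (hv.ne_zero i rfl).elim
  have hroot := isRoot_charpoly_iff_exists_mulVec_eq_smul.mpr ⟨v, hv0, heig⟩
  simp only [← isRoot_charpoly_iff_exists_mulVec_eq_smul]
  rcases lt_trichotomy |lam| 1 with hlt | heq | hgt
  · have hdet : 1 ≤ ‖(A.map (Int.cast : ℤ → ℝ)).det‖ := by
      rw [← Int.cast_det, Int.norm_cast_real, Int.norm_eq_abs]
      exact_mod_cast Int.one_le_abs (det_ne_zero_of_map_mulVec_eq_smul hA hv heig)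
    obtain ⟨μ, hμ, hμ1⟩ := exists_isRoot_charpoly_one_lt_norm hsplits hdet hroot hlt
    exact .inr (.inr ⟨μ, hμ1, hμ⟩)
  · rcases eq_or_eq_neg_of_abs_eq heq with rfl | rfl
    · exact .inl <| by
        simpa using eq_smul_one_of_map_mulVec_eq_smul hv (r := 1) (by simpa using heig)
    · exact .inr <| .inl <| by
        simpa using eq_smul_one_of_map_mulVec_eq_smul hv (r := -1) (by simpa using heig)
  · exact .inr (.inr ⟨lam, hgt, hroot⟩)

end Eigenvalues

/-- An integer 2×2 matrix of determinant ±1 having a real eigenvector of irrational slope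
is either ±Id or hyperbolic (it has a real eigenvalue of absolute value greater than one). -/
theorem irrational_eigendirection_implies_hyperbolic_or_pm_id
    (A : Matrix (Fin 2) (Fin 2) ℤ) (hdet : A.det = 1 ∨ A.det = -1)
    (lam : ℝ) (v : Fin 2 → ℝ) (hv : v ≠ 0)
    (heig : (A.map (Int.cast : ℤ → ℝ)) *ᵥ v = lam • v)
    (hirr : ∀ (c : ℝ) (w : Fin 2 → ℤ), w ≠ 0 → v ≠ c • fun i => (w i : ℝ)) :
    A = 1 ∨ A = -1 ∨
      ∃ μ : ℝ, 1 < |μ| ∧ ∃ w : Fin 2 → ℝ, w ≠ 0 ∧ (A.map (Int.cast : ℤ → ℝ)) *ᵥ w = μ • w := by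
  have hroot := isRoot_charpoly_iff_exists_mulVec_eq_smul.mpr ⟨v, hv, heig⟩
  have hA : A ≠ 0 := by rintro rfl; simp at hdet
  exact irrational_eigendirection_implies_hyperbolic_or_pm_id_general hA
    (splits_charpoly_fin_two hroot) (linearIndependent_int_of_forall_ne_smul hirr) heig
end

section
/- Work in ℝᵈ with Lebesgue measure m. Let U, V ⊆ ℝᵈ be open sets, h : U → V a homeomorphism, x ∈ U, y = h(x), and C ≥ 1, r₀ > 0 constants such that: (i) for every measurable E ⊆ U, (1/C)·m(E) ≤ m(h(E)) ≤ C·m(E); (ii) for every 0 < r < r₀, the closed ball B(x,r) is contained in U and B(y,r/C) ⊆ h(B(x,r)) ⊆ B(y,C·r) ⊆ V. Let A ⊆ ℝᵈ be measurable with m(h(A ∩ U) Δ (A ∩ V)) = 0. If x is a Lebesgue density point of A, i.e. m(A ∩ B(x,r))/m(B(x,r)) → 1 as r → 0⁺, then y is also a Lebesgue density point of A. -/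
open MeasureTheory Metric Filter Set

/-!
A point `y` is a density point of `B` iff the relative measure of `Bᶜ` in small balls around `y`
tends to `0`. Up to a null set, the part of a small ball around `y = h x` outside `B` is covered
by the `h`-image of the part outside `A` of a ball around `x` whose radius is larger by the factor
`C`. The measure of this image is at most a constant times the measure of the set itself, and the
volumes of the two balls are comparable, so the relative measure of `Bᶜ` near `y` is at most a
constant times that of `Aᶜ` near `x`.
-/

open scoped ENNReal Topology

lemma tendsto_one_iff_tendsto_zero_of_add_eq_one {ι : Type*} {l : Filter ι} {f g : ι → ℝ≥0∞}
    (hfg : ∀ᶠ i in l, f i + g i = 1) : Tendsto f l (𝓝 1) ↔ Tendsto g l (𝓝 0) := by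
  have hle : ∀ᶠ i in l, f i ≤ 1 ∧ g i ≤ 1 :=
    hfg.mono fun i hi => ⟨hi ▸ le_self_add, hi ▸ le_add_self⟩
  constructor
  · intro hf
    have hsub := ENNReal.Tendsto.sub tendsto_const_nhds hf (.inl ENNReal.one_ne_top)
    rw [tsub_self] at hsub
    refine hsub.congr' ?_
    filter_upwards [hfg, hle] with i hi hi_le
    exact ENNReal.sub_eq_of_eq_add_rev (hi_le.1.trans_lt ENNReal.one_lt_top).ne hi.symm
  · intro hg
    have hsub := ENNReal.Tendsto.sub tendsto_const_nhds hg (.inl ENNReal.one_ne_top)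
    rw [tsub_zero] at hsub
    refine hsub.congr' ?_
    filter_upwards [hfg, hle] with i hi hi_le
    exact ENNReal.sub_eq_of_eq_add (hi_le.2.trans_lt ENNReal.one_lt_top).ne hi.symm

lemma measure_inter_div_add_measure_diff_div {X : Type*} [MeasurableSpace X] {μ : Measure X}
    {A s : Set X} (hA : NullMeasurableSet A μ) (hs₀ : μ s ≠ 0) (hs : μ s ≠ ∞) :
    μ (A ∩ s) / μ s + μ (s \ A) / μ s = 1 := by
  rw [← ENNReal.add_div, inter_comm, measure_inter_add_sdiff₀ _ hA, ENNReal.div_self hs₀ hs]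

lemma measure_diff_le_of_subset_image {X Y : Type*} [MeasurableSpace X] [MeasurableSpace Y]
    {μ : Measure X} {ν : Measure Y} {h : X → Y} {U A s : Set X} {B t : Set Y} {L : ℝ≥0∞}
    (hmeas : ∀ E ⊆ U, MeasurableSet E → ν (h '' E) ≤ L * μ E) (hA : MeasurableSet A)
    (hs : MeasurableSet s) (hsU : s ⊆ U) (hAB : h '' (A ∩ U) ≤ᵐ[ν] B) (hts : t ⊆ h '' s) :
    ν (t \ B) ≤ L * μ (s \ A) := by
  have hsub : t \ B ⊆ h '' (s \ A) ∪ h '' (A ∩ U) \ B := by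
    rintro z ⟨hzt, hzB⟩
    obtain ⟨w, hws, rfl⟩ := hts hzt
    by_cases hwA : w ∈ A
    · exact .inr ⟨mem_image_of_mem h ⟨hwA, hsU hws⟩, hzB⟩
    · exact .inl (mem_image_of_mem h ⟨hws, hwA⟩)
  calc ν (t \ B) ≤ ν (h '' (s \ A)) + ν (h '' (A ∩ U) \ B) :=
        (measure_mono hsub).trans (measure_union_le _ _)
    _ = ν (h '' (s \ A)) := by rw [ae_le_set.1 hAB, add_zero]
    _ ≤ L * μ (s \ A) := hmeas _ (sdiff_subset.trans hsU) (hs.diff hA)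

/-- `x` is a density point of `A` for the measure `μ`: closed balls around `x` are asymptotically
filled by `A`. Radii tend to `0` through positive values only, and `x` need not lie in `A`. -/
def IsDensityPoint {X : Type*} [PseudoMetricSpace X] [MeasurableSpace X] (μ : Measure X)
    (A : Set X) (x : X) : Prop :=
  Tendsto (fun r : ℝ => μ (A ∩ closedBall x r) / μ (closedBall x r)) (𝓝[>] 0) (𝓝 1)

section PseudoMetricSpace

variable {X Y : Type*} [PseudoMetricSpace X] [MeasurableSpace X] [PseudoMetricSpace Y]
  [MeasurableSpace Y]

lemma eventually_measure_closedBall_ne_zero_ne_top (μ : Measure X) [μ.IsOpenPosMeasure]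
    [IsLocallyFiniteMeasure μ] (x : X) :
    ∀ᶠ r in 𝓝[>] (0 : ℝ), μ (closedBall x r) ≠ 0 ∧ μ (closedBall x r) ≠ ∞ := by
  have hfin : ∀ᶠ r in 𝓝[>] (0 : ℝ), μ (closedBall x r) < ∞ :=
    ((tendsto_closedBall_smallSets x).mono_left nhdsWithin_le_nhds).eventually
      (μ.finiteAt_nhds x).eventually
  filter_upwards [self_mem_nhdsWithin, hfin] with r hr hr_fin
  exact ⟨(measure_closedBall_pos μ x hr).ne', hr_fin.ne⟩

lemma isDensityPoint_iff_tendsto_diff {μ : Measure X} [μ.IsOpenPosMeasure]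
    [IsLocallyFiniteMeasure μ] {A : Set X} {x : X} (hA : NullMeasurableSet A μ) :
    IsDensityPoint μ A x ↔
      Tendsto (fun r : ℝ => μ (closedBall x r \ A) / μ (closedBall x r)) (𝓝[>] 0) (𝓝 0) :=
  tendsto_one_iff_tendsto_zero_of_add_eq_one <|
    (eventually_measure_closedBall_ne_zero_ne_top μ x).mono fun _ hr =>
      measure_inter_div_add_measure_diff_div hA hr.1 hr.2

lemma IsDensityPoint.of_measure_diff_le {μ : Measure X} {ν : Measure Y} [μ.IsOpenPosMeasure]
    [IsLocallyFiniteMeasure μ] [ν.IsOpenPosMeasure] [IsLocallyFiniteMeasure ν] {A : Set X}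
    {B : Set Y} {x : X} {y : Y} {ρ : ℝ → ℝ} {K L : ℝ≥0∞} (hx : IsDensityPoint μ A x)
    (hA : NullMeasurableSet A μ) (hB : NullMeasurableSet B ν) (hK : K ≠ ∞) (hL : L ≠ ∞)
    (hρ : Tendsto ρ (𝓝[>] 0) (𝓝[>] 0))
    (hvol : ∀ᶠ r in 𝓝[>] 0, μ (closedBall x (ρ r)) ≤ K * ν (closedBall y r))
    (hdiff : ∀ᶠ r in 𝓝[>] 0, ν (closedBall y r \ B) ≤ L * μ (closedBall x (ρ r) \ A)) :
    IsDensityPoint ν B y := by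
  rw [isDensityPoint_iff_tendsto_diff hA] at hx
  rw [isDensityPoint_iff_tendsto_diff hB]
  have hlim := ENNReal.Tendsto.const_mul (hx.comp hρ) (.inr (ENNReal.mul_ne_top hL hK))
  rw [mul_zero] at hlim
  refine tendsto_of_tendsto_of_tendsto_of_le_of_le' tendsto_const_nhds hlim
    (.of_forall fun _ => zero_le) ?_
  filter_upwards [hvol, hdiff, eventually_measure_closedBall_ne_zero_ne_top ν y,
    hρ.eventually (eventually_measure_closedBall_ne_zero_ne_top μ x)]
    with r hr_vol hr_diff ⟨hν₀, hν⟩ ⟨hμ₀, hμ⟩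
  rw [ENNReal.div_le_iff hν₀ hν]
  let q := μ (closedBall x (ρ r) \ A) / μ (closedBall x (ρ r))
  calc ν (closedBall y r \ B) ≤ L * μ (closedBall x (ρ r) \ A) := hr_diff
    _ = L * (q * μ (closedBall x (ρ r))) := by rw [ENNReal.div_mul_cancel hμ₀ hμ]
    _ ≤ L * (q * (K * ν (closedBall y r))) := by gcongr
    _ = L * K * q * ν (closedBall y r) := by ring

end PseudoMetricSpace

section AddHaar

variable {E F : Type*} [NormedAddCommGroup E] [NormedSpace ℝ E] [FiniteDimensional ℝ E]
  [MeasurableSpace E] [BorelSpace E] [NormedAddCommGroup F] [NormedSpace ℝ F]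
  [FiniteDimensional ℝ F] [MeasurableSpace F] [BorelSpace F]

lemma addHaar_closedBall_mul_eq_of_finrank_eq (μ : Measure E) [μ.IsAddHaarMeasure]
    (ν : Measure F) [ν.IsAddHaarMeasure] (hEF : Module.finrank ℝ E = Module.finrank ℝ F)
    (x : E) (y : F) {C r : ℝ} (hC : 0 ≤ C) (hr : 0 ≤ r) :
    μ (closedBall x (C * r)) =
      ENNReal.ofReal (C ^ Module.finrank ℝ E) * (μ (ball 0 1) / ν (ball 0 1)) *
        ν (closedBall y r) := by
  have hν₀ : ν (ball 0 1) ≠ 0 := (measure_ball_pos ν 0 one_pos).ne'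
  rw [Measure.addHaar_closedBall_mul μ x hC hr, Measure.addHaar_closedBall μ 0 hr,
    Measure.addHaar_closedBall ν y hr, ← hEF]
  nth_rw 1 [← ENNReal.div_mul_cancel (b := μ (ball 0 1)) hν₀ measure_ball_lt_top.ne]
  ring

theorem holonomy_preserves_density_points_general {μ : Measure E} [μ.IsAddHaarMeasure]
    {ν : Measure F} [ν.IsAddHaarMeasure] (hEF : Module.finrank ℝ E = Module.finrank ℝ F)
    {h : E → F} {U A : Set E} {B : Set F} {x : E} {y : F} {C : ℝ} {L : ℝ≥0∞}
    (hU : U ∈ 𝓝 x) (hC : 0 < C) (hL : L ≠ ∞)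
    (hmeas : ∀ s ⊆ U, MeasurableSet s → ν (h '' s) ≤ L * μ s)
    (hballs : ∀ᶠ r in 𝓝[>] 0, closedBall y (r / C) ⊆ h '' closedBall x r)
    (hA : MeasurableSet A) (hB : NullMeasurableSet B ν) (hAB : h '' (A ∩ U) ≤ᵐ[ν] B)
    (hx : IsDensityPoint μ A x) : IsDensityPoint ν B y := by
  have hscale : Tendsto (C * ·) (𝓝[>] 0) (𝓝[>] 0) :=
    tendsto_iff_comap.2 (comap_mulLeft_nhdsGT_zero hC).ge
  have hsmall : ∀ᶠ r in 𝓝[>] (0 : ℝ), closedBall x r ⊆ U :=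
    nhdsWithin_le_nhds (eventually_closedBall_subset hU)
  refine hx.of_measure_diff_le hA.nullMeasurableSet hB
    (K := ENNReal.ofReal (C ^ Module.finrank ℝ E) * (μ (ball 0 1) / ν (ball 0 1)))
    ?_ hL hscale ?_ ?_
  · exact ENNReal.mul_ne_top ENNReal.ofReal_ne_top <|
      ENNReal.div_ne_top measure_ball_lt_top.ne (measure_ball_pos ν 0 one_pos).ne'
  · filter_upwards [self_mem_nhdsWithin] with r hr
    exact (addHaar_closedBall_mul_eq_of_finrank_eq μ ν hEF x y hC.le (le_of_lt hr)).le
  · filter_upwards [hscale.eventually hballs, hscale.eventually hsmall] with r hr_balls hr_small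
    rw [mul_div_cancel_left₀ r hC.ne'] at hr_balls
    exact measure_diff_le_of_subset_image hmeas hA measurableSet_closedBall hr_small hAB hr_balls

end AddHaar

/-- A homeomorphism between open sets of ℝᵈ distorting measure and balls by a bounded factor
and carrying a set `A` to itself (mod zero) maps Lebesgue density points of `A` to Lebesgue
density points of `A`. -/
theorem holonomy_preserves_density_points {d : ℕ}
    (U V : Set (EuclideanSpace ℝ (Fin d))) (hU : IsOpen U) (hV : IsOpen V)
    (h g : EuclideanSpace ℝ (Fin d) → EuclideanSpace ℝ (Fin d))
    (hcont : ContinuousOn h U) (hbij : Set.BijOn h U V)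
    (hgcont : ContinuousOn g V) (hginv : Set.InvOn g h U V)
    (x y : EuclideanSpace ℝ (Fin d)) (hxU : x ∈ U) (hy : y = h x)
    (C r₀ : ℝ) (hC : 1 ≤ C) (hr₀ : 0 < r₀)
    (hmeas : ∀ E ⊆ U, MeasurableSet E →
      ENNReal.ofReal (1 / C) * volume E ≤ volume (h '' E) ∧
      volume (h '' E) ≤ ENNReal.ofReal C * volume E)
    (hballs : ∀ r : ℝ, 0 < r → r < r₀ →
      closedBall x r ⊆ U ∧
      closedBall y (r / C) ⊆ h '' closedBall x r ∧
      h '' closedBall x r ⊆ closedBall y (C * r) ∧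
      closedBall y (C * r) ⊆ V)
    (A : Set (EuclideanSpace ℝ (Fin d))) (hA : MeasurableSet A)
    (hAinv : volume (symmDiff (h '' (A ∩ U)) (A ∩ V)) = 0)
    (hx : Tendsto (fun r : ℝ => volume (A ∩ closedBall x r) / volume (closedBall x r))
      (nhdsWithin 0 (Set.Ioi 0)) (nhds 1)) :
    Tendsto (fun r : ℝ => volume (A ∩ closedBall y r) / volume (closedBall y r))
      (nhdsWithin 0 (Set.Ioi 0)) (nhds 1) := by
  have hAB : h '' (A ∩ U) ≤ᵐ[volume] A := ae_le_set.2 <|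
    measure_mono_null ((sdiff_subset_sdiff_right inter_subset_left).trans subset_union_left) hAinv
  exact holonomy_preserves_density_points_general rfl (hU.mem_nhds hxU) (one_pos.trans_le hC)
    ENNReal.ofReal_ne_top (fun E hE hEm => (hmeas E hE hEm).2)
    (eventually_of_mem (Ioo_mem_nhdsGT hr₀) fun r hr => (hballs r hr.1 hr.2).2.1)
    hA hA.nullMeasurableSet hAB hx
end
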